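/- arXiv:2309.09859 — 3 statements merged into one kernel-verified Lean document; each statement's English description precedes it below -/
import Mathlib

section
/- Let k > 0, λ > 0 and γ_th > 0. For γ̄ > 0 define the outage probability F(γ̄) = (1/Γ(k)) ∫_0^{√(γ_th/γ̄)/λ} t^{k−1} e^{−t} dt. Then lim_{γ̄ → ∞} γ̄^{k/2} F(γ̄) = γ_th^{k/2} / (Γ(k+1) λ^k). In particular the SNR outage probability decays like (γ_th/γ̄)^{k/2}, i.e. the diversity order is k/2 and the coding gain is 1/(Γ(k+1) λ^k). -/
open Real Filter

/-!
Near `0` the weight `exp (-t)` is `1 + o(1)`, and integrating `o(t ^ (k - 1))` over `[0, x]` gives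
`o(x ^ k)`, so the regularized incomplete Gamma integral is `x ^ k / Γ(k + 1) + o(x ^ k)` as
`x → 0⁺`. At `x = √(γth / γbar) / lam` the product `γbar ^ (k / 2) * x ^ k` is the constant
`γth ^ (k / 2) / lam ^ k`.
-/

section SmallArgumentAsymptotics

open MeasureTheory Asymptotics Set
open scoped Topology

variable {E : Type*} [NormedAddCommGroup E] [NormedSpace ℝ E] {k a b : ℝ}

lemma intervalIntegrable_rpow_sub_one (hk : 0 < k) (x y : ℝ) :
    IntervalIntegrable (fun t : ℝ ↦ t ^ (k - 1)) volume x y :=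
  intervalIntegral.intervalIntegrable_rpow' (by linarith)

lemma integral_zero_rpow_sub_one (hk : 0 < k) (x : ℝ) :
    ∫ t in (0 : ℝ)..x, t ^ (k - 1) = x ^ k / k := by
  rw [integral_rpow (Or.inl (by linarith)), sub_add_cancel, zero_rpow hk.ne', sub_zero]

lemma isLittleO_integral_of_isLittleO_rpow_sub_one {f : ℝ → E} (hk : 0 < k)
    (hf : f =o[𝓝[>] 0] fun t ↦ t ^ (k - 1)) :
    (fun x ↦ ∫ t in (0 : ℝ)..x, f t) =o[𝓝[>] 0] fun x ↦ x ^ k := by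
  refine isLittleO_iff.2 fun ε hε ↦ ?_
  obtain ⟨δ, hδ, hbound⟩ :=
    mem_nhdsGT_iff_exists_Ioo_subset.1 (isLittleO_iff.1 hf (mul_pos hε hk))
  filter_upwards [Ioo_mem_nhdsGT hδ] with x ⟨hx, hxδ⟩
  calc ‖∫ t in (0 : ℝ)..x, f t‖ ≤ ∫ t in (0 : ℝ)..x, ε * k * t ^ (k - 1) := by
        refine intervalIntegral.norm_integral_le_of_norm_le hx.le (ae_of_all _ fun t ht ↦ ?_)
          ((intervalIntegrable_rpow_sub_one hk 0 x).const_mul _)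
        simpa only [mem_ofPred_eq, norm_of_nonneg (rpow_nonneg ht.1.le _)]
          using hbound ⟨ht.1, ht.2.trans_lt hxδ⟩
    _ = ε * ‖x ^ k‖ := by
        rw [intervalIntegral.integral_const_mul, integral_zero_rpow_sub_one hk,
          norm_of_nonneg (rpow_nonneg hx.le _)]
        field_simp

lemma tendsto_rpow_neg_smul_integral_rpow_sub_one_smul [CompleteSpace E] {g : ℝ → E} {c : E}
    (hk : 0 < k)
    (hint : ∀ᶠ x in 𝓝[>] (0 : ℝ), IntervalIntegrable (fun t ↦ t ^ (k - 1) • g t) volume 0 x)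
    (hg : Tendsto g (𝓝[>] 0) (𝓝 c)) :
    Tendsto (fun x : ℝ ↦ x ^ (-k) • ∫ t in (0 : ℝ)..x, t ^ (k - 1) • g t) (𝓝[>] 0)
      (𝓝 (k⁻¹ • c)) := by
  have remainder : (fun x : ℝ ↦ ∫ t in (0 : ℝ)..x, t ^ (k - 1) • (g t - c))
      =o[𝓝[>] 0] fun x ↦ x ^ k := by
    refine isLittleO_integral_of_isLittleO_rpow_sub_one hk ?_
    simpa only [smul_eq_mul, mul_one] using
      (isBigO_refl (fun t : ℝ ↦ t ^ (k - 1)) _).smul_isLittleO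
        ((isLittleO_one_iff ℝ).2 (tendsto_sub_nhds_zero_iff.2 hg))
  rw [← tendsto_sub_nhds_zero_iff]
  refine remainder.tendsto_inv_smul_nhds_zero.congr' ?_
  filter_upwards [hint, self_mem_nhdsWithin] with x hx (hx0 : 0 < x)
  have hconst : IntervalIntegrable (fun t : ℝ ↦ t ^ (k - 1) • c) volume 0 x :=
    (intervalIntegrable_rpow_sub_one hk 0 x).smul_continuousOn continuousOn_const
  simp only [smul_sub]
  rw [intervalIntegral.integral_sub hx hconst, intervalIntegral.integral_smul_const,
    integral_zero_rpow_sub_one hk, smul_sub, smul_smul, rpow_neg hx0.le,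
    div_eq_mul_inv, inv_mul_cancel_left₀ (rpow_pos_of_pos hx0 k).ne']

lemma tendsto_rpow_neg_mul_regularized_lower_gamma (hk : 0 < k) :
    Tendsto (fun x : ℝ ↦ x ^ (-k) *
      ((1 / Gamma k) * ∫ t in (0 : ℝ)..x, t ^ (k - 1) * exp (-t)))
      (𝓝[>] 0) (𝓝 (1 / Gamma (k + 1))) := by
  have hexp : Tendsto (fun t : ℝ ↦ exp (-t)) (𝓝[>] 0) (𝓝 1) :=
    (Continuous.tendsto' (by fun_prop) 0 1 (by simp)).mono_left nhdsWithin_le_nhds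
  have hint (x : ℝ) : IntervalIntegrable (fun t ↦ t ^ (k - 1) • exp (-t)) volume 0 x :=
    (intervalIntegrable_rpow_sub_one hk 0 x).smul_continuousOn (by fun_prop)
  have hlim := (tendsto_rpow_neg_smul_integral_rpow_sub_one_smul hk
    (Eventually.of_forall hint) hexp).const_mul (1 / Gamma k)
  rw [Gamma_add_one hk.ne']
  convert hlim using 2 with x
  · simp only [smul_eq_mul]
    ring
  · simp only [smul_eq_mul]
    field_simp

lemma tendsto_sqrt_div_div_atTop_nhdsGT_zero (ha : 0 < a) (hb : 0 < b) :
    Tendsto (fun y : ℝ ↦ √(a / y) / b) atTop (𝓝[>] 0) := by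
  refine tendsto_nhdsWithin_iff.2 ⟨?_, ?_⟩
  · have hquot : Tendsto (fun y : ℝ ↦ a / y) atTop (𝓝 0) := tendsto_const_nhds.div_atTop tendsto_id
    simpa only [sqrt_zero, zero_div] using hquot.sqrt.div_const b
  · filter_upwards [eventually_gt_atTop 0] with y hy
    exact div_pos (sqrt_pos.2 (div_pos ha hy)) hb

lemma rpow_half_eq_mul_sqrt_div_div_rpow_neg {y : ℝ} (ha : 0 < a) (hb : 0 < b) (hy : 0 < y) :
    y ^ (k / 2) = a ^ (k / 2) / b ^ k * (√(a / y) / b) ^ (-k) := by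
  have hsqrt : √(a / y) ^ k = a ^ (k / 2) / y ^ (k / 2) := by
    rw [sqrt_eq_rpow, ← rpow_mul (by positivity), one_div_mul_eq_div, div_rpow ha.le hy.le]
  rw [rpow_neg (by positivity), div_rpow (sqrt_nonneg _) hb.le, hsqrt]
  field_simp

lemma tendsto_rpow_half_smul_comp_sqrt_div_div {Φ : ℝ → E} {L : E} (ha : 0 < a)
    (hb : 0 < b) (hΦ : Tendsto (fun x ↦ x ^ (-k) • Φ x) (𝓝[>] 0) (𝓝 L)) :
    Tendsto (fun y : ℝ ↦ y ^ (k / 2) • Φ (√(a / y) / b)) atTop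
      (𝓝 ((a ^ (k / 2) / b ^ k) • L)) := by
  refine ((hΦ.comp (tendsto_sqrt_div_div_atTop_nhdsGT_zero ha hb)).const_smul _).congr' ?_
  filter_upwards [eventually_gt_atTop 0] with y hy
  rw [rpow_half_eq_mul_sqrt_div_div_rpow_neg ha hb hy, mul_smul, Function.comp_apply]

end SmallArgumentAsymptotics

theorem stmt_10 (k lam γth : ℝ) (hk : 0 < k) (hlam : 0 < lam) (hγth : 0 < γth) :
    Tendsto (fun γbar : ℝ =>
        γbar ^ (k/2) * ((1 / Real.Gamma k) *
          ∫ t in (0:ℝ)..(Real.sqrt (γth / γbar) / lam), t ^ (k - 1) * Real.exp (-t)))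
      atTop (nhds (γth ^ (k/2) / (Real.Gamma (k+1) * lam ^ k))) := by
  have hlimit : γth ^ (k / 2) / (Gamma (k + 1) * lam ^ k) =
      γth ^ (k / 2) / lam ^ k * (1 / Gamma (k + 1)) := by
    rw [div_mul_div_comm, mul_one, mul_comm (Gamma (k + 1))]
  rw [hlimit]
  exact tendsto_rpow_half_smul_comp_sqrt_div_div hγth hlam
    (tendsto_rpow_neg_mul_regularized_lower_gamma hk)
end

section
/- Let k > 0, λ > 0 and ν > 0, and let Q(x) = (1/√(2π)) ∫_x^∞ e^{−t²/2} dt. For γ̄ > 0 define the average bit error rate P̄(γ̄) = ∫_0^∞ Q(x √(ν γ̄)) · (x^{k−1} e^{−x/λ} / (Γ(k) λ^k)) dx. Then lim_{γ̄ → ∞} γ̄^{k/2} P̄(γ̄) = 2^{(k−1)/2} Γ((k+1)/2) / ( √(2π) · k · Γ(k) · λ^k · ν^{k/2} ). In particular the average BER decays like γ̄^{−k/2}, so the achievable diversity order is k/2. -/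
open Real Filter MeasureTheory

/-- The Gaussian Q-function `Q(x) = (1/√(2π)) ∫_x^∞ e^{−t²/2} dt`. -/
noncomputable def gaussQ (x : ℝ) : ℝ :=
  (1 / Real.sqrt (2 * π)) * ∫ t in Set.Ioi x, Real.exp (-t^2 / 2)

/-!
With `s = √(ν γ̄)`, the substitution `y = x s` turns `s ^ k ∫₀^∞ Q(x s) x^{k-1} h(x) dx` into
`∫₀^∞ Q(y) y^{k-1} h(y / s) dy`. As `s → ∞` the bounded factor `h(y / s)` tends to `h(0+)`, so by
dominated convergence only the behaviour of the density of the fading amplitude at the origin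
matters; the limit is `h(0+) ∫₀^∞ Q(y) y^{k-1} dy`. Since `Q(y)` is the upper tail
`ℙ(X > y)` of a standard normal variable, the layer cake formula evaluates this moment as
`k⁻¹ 𝔼[X^k; X > 0]`, a Gamma value.
-/

section LayerCake

open Set

variable {α : Type*} {mα : MeasurableSpace α} {μ : Measure α} {f : α → ℝ} {p : ℝ}

lemma toReal_measure_mul_ofReal (s : Set α) {r : ℝ} (hr : 0 ≤ r) :
    (μ s * ENNReal.ofReal r).toReal = μ.real s * r := by
  rw [ENNReal.toReal_mul, ENNReal.toReal_ofReal hr, measureReal_def]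

lemma measurable_measure_lt_mul_ofReal_rpow :
    Measurable fun t => μ {a | t < f a} * ENNReal.ofReal (t ^ p) := by
  have htail : Antitone fun t => μ {a | t < f a} :=
    fun s t hst => measure_mono fun a (ha : t < f a) => hst.trans_lt ha
  exact htail.measurable.mul (by fun_prop)

lemma lintegral_measure_lt_mul_ofReal_rpow (hf : 0 ≤ᵐ[μ] f) (hfm : AEMeasurable f μ) (hp : 0 < p)
    (hint : Integrable (fun a => f a ^ p) μ) :
    ∫⁻ t in Ioi 0, μ {a | t < f a} * ENNReal.ofReal (t ^ (p - 1)) =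
      ENNReal.ofReal ((∫ a, f a ^ p ∂μ) / p) := by
  have hfp : 0 ≤ᵐ[μ] fun a => f a ^ p := hf.mono fun a ha => rpow_nonneg ha p
  have hcake := lintegral_rpow_eq_lintegral_meas_lt_mul μ hf hfm hp
  rw [← ofReal_integral_eq_lintegral_ofReal hint hfp] at hcake
  rw [ENNReal.ofReal_div_of_pos hp, hcake, mul_comm,
    ENNReal.mul_div_cancel_right (by simpa using hp) ENNReal.ofReal_ne_top]

lemma integrableOn_measureReal_lt_mul_rpow (hf : 0 ≤ᵐ[μ] f) (hfm : AEMeasurable f μ) (hp : 0 < p)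
    (hint : Integrable (fun a => f a ^ p) μ) :
    IntegrableOn (fun t => μ.real {a | t < f a} * t ^ (p - 1)) (Ioi 0) := by
  have hfin := (lintegral_measure_lt_mul_ofReal_rpow hf hfm hp hint).trans_ne ENNReal.ofReal_ne_top
  exact IntegrableOn.congr_fun
    (integrable_toReal_of_lintegral_ne_top
      measurable_measure_lt_mul_ofReal_rpow.aemeasurable hfin)
    (fun t ht => toReal_measure_mul_ofReal _ (rpow_nonneg (le_of_lt ht) _)) measurableSet_Ioi

lemma setIntegral_measureReal_lt_mul_rpow (hf : 0 ≤ᵐ[μ] f) (hfm : AEMeasurable f μ) (hp : 0 < p)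
    (hint : Integrable (fun a => f a ^ p) μ) :
    ∫ t in Ioi 0, μ.real {a | t < f a} * t ^ (p - 1) = (∫ a, f a ^ p ∂μ) / p := by
  have hlint := lintegral_measure_lt_mul_ofReal_rpow hf hfm hp hint
  have hfin :=
    ae_lt_top measurable_measure_lt_mul_ofReal_rpow (hlint.trans_ne ENNReal.ofReal_ne_top)
  have hnonneg : 0 ≤ ∫ a, f a ^ p ∂μ :=
    integral_nonneg_of_ae (hf.mono fun a ha => rpow_nonneg ha p)
  rw [← setIntegral_congr_fun measurableSet_Ioi fun t ht =>
      toReal_measure_mul_ofReal _ (rpow_nonneg (le_of_lt ht) _),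
    integral_toReal measurable_measure_lt_mul_ofReal_rpow.aemeasurable hfin, hlint,
    ENNReal.toReal_ofReal (by positivity)]

end LayerCake

section TailMoments

open Set

variable {μ : Measure ℝ} {p : ℝ}

lemma ae_restrict_Ioi_zero_nonneg : ∀ᵐ x ∂μ.restrict (Ioi 0), 0 ≤ x :=
  ae_restrict_of_forall_mem measurableSet_Ioi fun _ hx => le_of_lt hx

lemma measureReal_restrict_Ioi_zero_lt {t : ℝ} (ht : 0 ≤ t) :
    (μ.restrict (Ioi 0)).real {x | t < x} = μ.real (Ioi t) := by
  change (μ.restrict (Ioi 0)).real (Ioi t) = μ.real (Ioi t)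
  rw [measureReal_restrict_apply measurableSet_Ioi, Ioi_inter_Ioi, max_eq_left ht]

lemma integrableOn_measureReal_Ioi_mul_rpow (hp : 0 < p)
    (hint : IntegrableOn (fun x => x ^ p) (Ioi 0) μ) :
    IntegrableOn (fun t => μ.real (Ioi t) * t ^ (p - 1)) (Ioi 0) := by
  refine (integrableOn_measureReal_lt_mul_rpow ae_restrict_Ioi_zero_nonneg aemeasurable_id' hp
    hint).congr_fun (fun t ht => ?_) measurableSet_Ioi
  simp only [measureReal_restrict_Ioi_zero_lt (le_of_lt ht)]

lemma setIntegral_measureReal_Ioi_mul_rpow (hp : 0 < p)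
    (hint : IntegrableOn (fun x => x ^ p) (Ioi 0) μ) :
    ∫ t in Ioi 0, μ.real (Ioi t) * t ^ (p - 1) = (∫ x in Ioi 0, x ^ p ∂μ) / p := by
  rw [← setIntegral_measureReal_lt_mul_rpow ae_restrict_Ioi_zero_nonneg aemeasurable_id' hp hint]
  refine setIntegral_congr_fun measurableSet_Ioi fun t ht => ?_
  simp only [measureReal_restrict_Ioi_zero_lt (le_of_lt ht)]

end TailMoments

section GaussianMoments

open Set ProbabilityTheory
open scoped NNReal

lemma integrableOn_Ioi_rpow_gaussianReal (m : ℝ) (v : ℝ≥0) {k : ℝ} (hk : 0 ≤ k) :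
    IntegrableOn (fun t => t ^ k) (Ioi 0) (gaussianReal m v) := by
  have habs : Integrable (fun t => ‖t‖ ^ k) (gaussianReal m v) := by
    simpa only [id, ENNReal.toReal_ofReal hk] using
      (memLp_id_gaussianReal' (ENNReal.ofReal k) ENNReal.ofReal_ne_top).integrable_norm_rpow'
  refine habs.integrableOn.congr_fun (fun t ht => ?_) measurableSet_Ioi
  simp only [norm_of_nonneg (le_of_lt ht)]

lemma setIntegral_gaussianReal_eq_setIntegral_smul {E : Type*} [NormedAddCommGroup E]
    [NormedSpace ℝ E] (m : ℝ) {v : ℝ≥0} (hv : v ≠ 0) {s : Set ℝ} (hs : MeasurableSet s)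
    (f : ℝ → E) :
    ∫ t in s, f t ∂gaussianReal m v = ∫ t in s, gaussianPDFReal m v t • f t := by
  rw [gaussianReal_of_var_ne_zero m hv,
    setIntegral_withDensity_eq_setIntegral_toReal_smul (measurable_gaussianPDF m v)
      (ae_of_all _ fun _ => gaussianPDF_lt_top) _ hs]
  simp only [toReal_gaussianPDF]

lemma setIntegral_Ioi_rpow_gaussianReal {v : ℝ≥0} (hv : v ≠ 0) {k : ℝ} (hk : -1 < k) :
    ∫ t in Ioi 0, t ^ k ∂gaussianReal 0 v =
      (2 * v) ^ (k / 2) * Gamma ((k + 1) / 2) / (2 * √π) := by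
  have hv' : (0 : ℝ) < 2 * v := by positivity
  have hpdf : ∀ t, gaussianPDFReal 0 v t * t ^ k =
      (√(2 * v) * √π)⁻¹ * (t ^ k * exp (-(2 * v : ℝ)⁻¹ * t ^ (2 : ℝ))) := fun t => by
    rw [gaussianPDFReal, ← sqrt_mul hv'.le, rpow_two, sub_zero]
    ring_nf
  have hpow : ((2 * v : ℝ)⁻¹) ^ (-(k + 1) / 2) = (2 * v) ^ (k / 2) * √(2 * v) := by
    rw [inv_rpow hv'.le, ← rpow_neg hv'.le, sqrt_eq_rpow, ← rpow_add hv']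
    ring_nf
  rw [setIntegral_gaussianReal_eq_setIntegral_smul 0 hv measurableSet_Ioi]
  simp only [smul_eq_mul, hpdf]
  rw [integral_const_mul, integral_rpow_mul_exp_neg_mul_rpow two_pos hk (inv_pos.2 hv'), hpow]
  field_simp

end GaussianMoments

section QFunction

open Set ProbabilityTheory

lemma gaussQ_eq_measureReal_Ioi (x : ℝ) : gaussQ x = (gaussianReal 0 1).real (Ioi x) := by
  rw [measureReal_def, gaussianReal_apply_eq_integral 0 one_ne_zero,
    ENNReal.toReal_ofReal (integral_nonneg (gaussianPDFReal_nonneg 0 1))]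
  simp only [gaussQ, gaussianPDFReal, NNReal.coe_one, mul_one, sub_zero, one_div,
    integral_const_mul]

variable {k : ℝ}

lemma integrableOn_gaussQ_mul_rpow (hk : 0 < k) :
    IntegrableOn (fun y => gaussQ y * y ^ (k - 1)) (Ioi 0) := by
  simp only [gaussQ_eq_measureReal_Ioi]
  exact integrableOn_measureReal_Ioi_mul_rpow hk (integrableOn_Ioi_rpow_gaussianReal 0 1 hk.le)

lemma setIntegral_gaussQ_mul_rpow (hk : 0 < k) :
    ∫ y in Ioi 0, gaussQ y * y ^ (k - 1) =
      2 ^ ((k - 1) / 2) * Gamma ((k + 1) / 2) / (√(2 * π) * k) := by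
  have hpow : (2 : ℝ) ^ ((k - 1) / 2) = 2 ^ (k / 2) / √2 := by
    rw [sub_div, rpow_sub two_pos, sqrt_eq_rpow]
  simp only [gaussQ_eq_measureReal_Ioi]
  rw [setIntegral_measureReal_Ioi_mul_rpow hk (integrableOn_Ioi_rpow_gaussianReal 0 1 hk.le),
    setIntegral_Ioi_rpow_gaussianReal one_ne_zero (by linarith), NNReal.coe_one, mul_one, hpow,
    sqrt_mul zero_le_two]
  field_simp
  rw [sq_sqrt zero_le_two]

end QFunction

section Rescaling

open Set
open scoped Topology

lemma rpow_mul_setIntegral_comp_mul (F h : ℝ → ℝ) (k : ℝ) {s : ℝ} (hs : 0 < s) :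
    s ^ k * ∫ x in Ioi 0, F (x * s) * (x ^ (k - 1) * h x) =
      ∫ y in Ioi 0, F y * y ^ (k - 1) * h (y / s) := by
  have hsub := integral_comp_mul_right_Ioi' (fun y => F y * y ^ (k - 1) * h (y / s)) 0 hs
  rw [zero_mul, smul_eq_mul] at hsub
  rw [← hsub, ← integral_const_mul, ← integral_const_mul]
  refine setIntegral_congr_fun measurableSet_Ioi fun x hx => ?_
  have hpow : s * (x * s) ^ (k - 1) = s ^ k * x ^ (k - 1) := by
    rw [mul_rpow (le_of_lt hx) hs.le, rpow_sub_one hs.ne']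
    field_simp
  simp only [mul_div_cancel_right₀ x hs.ne']
  linear_combination -(F (x * s) * h x) * hpow

lemma tendsto_rpow_mul_setIntegral_comp_mul {F h : ℝ → ℝ} {k c C : ℝ}
    (hF : IntegrableOn (fun y => F y * y ^ (k - 1)) (Ioi 0)) (hmeas : Measurable h)
    (hbound : ∀ x, 0 < x → ‖h x‖ ≤ C) (hlim : Tendsto h (𝓝[>] 0) (𝓝 c)) :
    Tendsto (fun s => s ^ k * ∫ x in Ioi 0, F (x * s) * (x ^ (k - 1) * h x)) atTop
      (𝓝 ((∫ y in Ioi 0, F y * y ^ (k - 1)) * c)) := by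
  suffices Tendsto (fun s => ∫ y in Ioi 0, F y * y ^ (k - 1) * h (y / s)) atTop
      (𝓝 (∫ y in Ioi 0, F y * y ^ (k - 1) * c)) by
    rw [← integral_mul_const]
    refine this.congr' ?_
    filter_upwards [eventually_gt_atTop 0] with s hs
    exact (rpow_mul_setIntegral_comp_mul F h k hs).symm
  refine tendsto_integral_filter_of_dominated_convergence (fun y => ‖F y * y ^ (k - 1)‖ * C)
    (.of_forall fun s => ?_) ?_ (hF.norm.mul_const C) ?_
  · exact hF.aestronglyMeasurable.mul
      (hmeas.comp (measurable_id.div_const s)).aestronglyMeasurable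
  · filter_upwards [eventually_gt_atTop 0] with s hs
    filter_upwards [ae_restrict_mem measurableSet_Ioi] with y hy
    rw [norm_mul]
    gcongr
    exact hbound _ (div_pos hy hs)
  · filter_upwards [ae_restrict_mem measurableSet_Ioi] with y hy
    have hscale : Tendsto (fun s => y / s) atTop (𝓝[>] 0) :=
      tendsto_nhdsWithin_iff.2 ⟨tendsto_const_nhds.div_atTop tendsto_id,
        (eventually_gt_atTop 0).mono fun s hs => div_pos hy hs⟩
    exact (hlim.comp hscale).const_mul _

lemma sqrt_mul_rpow {ν g : ℝ} (hν : 0 ≤ ν) (hg : 0 ≤ g) (k : ℝ) :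
    √(ν * g) ^ k = ν ^ (k / 2) * g ^ (k / 2) := by
  rw [← mul_rpow hν hg, sqrt_eq_rpow, ← rpow_mul (mul_nonneg hν hg)]
  ring_nf

end Rescaling

theorem stmt_11 (k lam ν : ℝ) (hk : 0 < k) (hlam : 0 < lam) (hν : 0 < ν) :
    Tendsto (fun γbar : ℝ =>
        γbar ^ (k/2) * ∫ x in Set.Ioi (0:ℝ),
          gaussQ (x * Real.sqrt (ν * γbar)) *
            (x ^ (k - 1) * Real.exp (-x / lam) / (Real.Gamma k * lam ^ k)))
      atTop
      (nhds ((2:ℝ) ^ ((k-1)/2) * Real.Gamma ((k+1)/2) /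
        (Real.sqrt (2*π) * k * Real.Gamma k * lam ^ k * ν ^ (k/2)))) := by
  have hscale : Tendsto (fun g : ℝ => √(ν * g)) atTop atTop :=
    tendsto_sqrt_atTop.comp (tendsto_id.const_mul_atTop hν)
  have hbound : ∀ x, 0 < x → ‖exp (-x / lam)‖ ≤ 1 := fun x hx => by
    rw [norm_of_nonneg (exp_pos _).le, exp_le_one_iff, neg_div]
    exact neg_nonpos.2 (by positivity)
  have hlim : Tendsto (fun x => exp (-x / lam)) (nhdsWithin 0 (Set.Ioi 0)) (nhds 1) :=
    ((by fun_prop : Continuous fun x => exp (-x / lam)).tendsto' 0 1 (by simp)).mono_left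
      nhdsWithin_le_nhds
  have hmain := ((tendsto_rpow_mul_setIntegral_comp_mul (integrableOn_gaussQ_mul_rpow hk)
    (by fun_prop) hbound hlim).comp hscale).div_const (Gamma k * lam ^ k * ν ^ (k / 2))
  rw [setIntegral_gaussQ_mul_rpow hk, mul_one, div_div] at hmain
  convert! hmain.congr' ?_ using 2
  · ring
  · filter_upwards [eventually_ge_atTop 0] with g hg
    simp only [Function.comp_apply, sqrt_mul_rpow hν.le hg, ← mul_div_assoc, integral_div]
    rw [mul_assoc, mul_comm (Gamma k * lam ^ k), mul_div_mul_left _ _ (by positivity)]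
end

section
/- Let Υ_u, Ῡ_u, Υ_f, Ῡ_f, Υ̂, Υ′, ζ_u, ζ_f, ζ_g, ζ_h all be strictly positive real constants. For each positive integer N define G_d(N) = (1/2) · Υ_u² ζ_u (Υ_f ζ_f^{1/2} + N Υ̂ ζ_g^{1/2} ζ_h^{1/2})² / [ ζ_u (Ῡ_u + Υ_u²)(Ῡ_f ζ_f + N Υ′ ζ_g ζ_h) + Ῡ_u ζ_u (Υ_f ζ_f^{1/2} + N Υ̂ ζ_g^{1/2} ζ_h^{1/2})² ]. Then lim_{N → ∞} G_d(N) = Υ_u² / (2 Ῡ_u). In particular, with Υ_u = Γ(m_u + 1/2)/Γ(m_u) and Ῡ_u = m_u − Υ_u², the limit equals (1/2) ( m_u (Γ(m_u)/Γ(m_u + 1/2))² − 1 )^{−1}, which depends only on the tag-to-reader fading parameter m_u and not on N. -/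
/-!
The mean is linear in the number `N` of elements, so its square is quadratic, while the variance is
a multiple of that square plus a remainder of degree one. Dividing by the square, the remainder
disappears and the limit is the ratio of the coefficients of the square.
-/

open Real Filter

section Dominance

open Asymptotics Bornology Polynomial Topology

variable {𝕜 : Type*} [NormedField 𝕜]

theorem tendsto_mul_div_add_mul_of_isLittleO {α : Type*} {l : Filter α} {w s : α → 𝕜}
    (hws : w =o[l] s) (hs : ∀ᶠ x in l, s x ≠ 0) (c : 𝕜) {d : 𝕜} (hd : d ≠ 0) :
    Tendsto (fun x => c * s x / (w x + d * s x)) l (𝓝 (c / d)) := by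
  have hden : Tendsto (fun x => w x / s x + d) l (𝓝 d) := by
    simpa only [zero_add] using hws.tendsto_div_nhds_zero.add_const d
  refine (tendsto_const_nhds.div hden hd).congr' ?_
  filter_upwards [hs] with x hx
  rw [Pi.div_apply, div_add' _ _ _ hx, div_div_eq_mul_div]

theorem tendsto_mul_eval_div_eval_add_mul_eval_cobounded {P Q : 𝕜[X]} (hPQ : P.degree < Q.degree)
    (c : 𝕜) {d : 𝕜} (hd : d ≠ 0) :
    Tendsto (fun x => c * Q.eval x / (P.eval x + d * Q.eval x)) (cobounded 𝕜) (𝓝 (c / d)) :=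
  tendsto_mul_div_add_mul_of_isLittleO (isLittleO_cobounded_of_degree_lt hPQ)
    ((eventually_cofinite_not_isRoot (ne_zero_of_degree_gt hPQ)).filter_mono (le_cofinite 𝕜)) c hd

theorem degree_linear_lt_degree_linear_sq {R : Type*} [Semiring R] [NoZeroDivisors R]
    (p q a : R) {b : R} (hb : b ≠ 0) :
    (C q * X + C p).degree < ((C b * X + C a) ^ 2).degree := by
  have := nontrivial_of_ne b 0 hb
  rw [degree_pow, degree_linear hb]
  exact degree_linear_lt

theorem tendsto_mul_sq_div_linear_add_mul_sq_cobounded (p q a c : 𝕜) {b d : 𝕜}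
    (hb : b ≠ 0) (hd : d ≠ 0) :
    Tendsto (fun x => c * (b * x + a) ^ 2 / (q * x + p + d * (b * x + a) ^ 2))
      (cobounded 𝕜) (𝓝 (c / d)) := by
  simpa only [eval_pow, eval_add, eval_mul, eval_C, eval_X] using
    tendsto_mul_eval_div_eval_add_mul_eval_cobounded
      (degree_linear_lt_degree_linear_sq p q a hb) c hd

end Dominance

theorem sq_div_two_mul_sub_sq {K : Type*} [Field K] {u : K} (hu : u ≠ 0) (m : K) :
    u ^ 2 / (2 * (m - u ^ 2)) = 1 / 2 * (m * u⁻¹ ^ 2 - 1)⁻¹ := by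
  have hratio : m * u⁻¹ ^ 2 - 1 = (m - u ^ 2) / u ^ 2 := by
    field_simp
  rw [hratio, inv_div, div_mul_div_comm, one_mul]

theorem stmt_12 (Uu Ubu Uf Ubf Uhat U' zu zf zg zh : ℝ)
    (hUu : 0 < Uu) (hUbu : 0 < Ubu) (hUf : 0 < Uf) (hUbf : 0 < Ubf)
    (hUhat : 0 < Uhat) (hU' : 0 < U') (hzu : 0 < zu) (hzf : 0 < zf)
    (hzg : 0 < zg) (hzh : 0 < zh) :
    Tendsto (fun N : ℕ =>
        (1/2) * (Uu^2 * zu * (Uf * Real.sqrt zf + N * Uhat * Real.sqrt zg * Real.sqrt zh)^2) /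
          (zu * (Ubu + Uu^2) * (Ubf * zf + N * U' * zg * zh)
            + Ubu * zu * (Uf * Real.sqrt zf + N * Uhat * Real.sqrt zg * Real.sqrt zh)^2))
      atTop (nhds (Uu^2 / (2 * Ubu))) ∧
    (∀ mu : ℝ, 0 < mu →
      Uu = Real.Gamma (mu + 1/2) / Real.Gamma mu →
      Ubu = mu - Uu^2 →
      Uu^2 / (2 * Ubu) = (1/2) * (mu * (Real.Gamma mu / Real.Gamma (mu + 1/2))^2 - 1)⁻¹) := by
  constructor
  · have hslope : Uhat * √zg * √zh ≠ 0 := by positivity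
    have hcoeff : Ubu * zu ≠ 0 := by positivity
    have hlimit : 1 / 2 * (Uu ^ 2 * zu) / (Ubu * zu) = Uu ^ 2 / (2 * Ubu) := by field_simp
    have hreal := tendsto_mul_sq_div_linear_add_mul_sq_cobounded
      (zu * (Ubu + Uu ^ 2) * (Ubf * zf)) (zu * (Ubu + Uu ^ 2) * (U' * zg * zh))
      (Uf * √zf) (1 / 2 * (Uu ^ 2 * zu)) hslope hcoeff
    rw [← hlimit]
    refine (hreal.comp tendsto_natCast_atTop_cobounded).congr fun N => ?_
    rw [Function.comp_apply]
    congr 1 <;> ring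
  · rintro mu - hU rfl
    rw [sq_div_two_mul_sub_sq hUu.ne', hU, inv_div]
end
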